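/- Let p ∈ (1,∞) and θ_p = 2 arcsin(2√(p−1)/p). Fix n,d ∈ ℕ with 0 ≤ d ≤ n. (i) For every function f : {-1,1}^n → ℂ of degree at most d and every t ≥ 0, ‖e^{-tΔ} f‖_{L_p} ≥ (((e^t+1)^{π/(2π−θ_p)} − (e^t−1)^{π/(2π−θ_p)}) / ((e^t+1)^{π/(2π−θ_p)} + (e^t−1)^{π/(2π−θ_p)}))^d · ‖f‖_{L_p}. (ii) For every function f : {-1,1}^n → ℂ in the d-th tail space and every t ≥ 0, ‖e^{-tΔ} f‖_{L_p} ≤ (((1+e^{-t})^{π/θ_p} − (1−e^{-t})^{π/θ_p}) / ((1+e^{-t})^{π/θ_p} + (1−e^{-t})^{π/θ_p}))^d · ‖f‖_{L_p}. -/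

import Mathlib

open scoped BigOperators ENNReal NNReal

noncomputable section

namespace HammingCube

variable {X : Type*} [NormedAddCommGroup X] [NormedSpace ℂ X]

/-- The sign ±1 associated to a boolean coordinate. -/
def sgn (b : Bool) : ℝ := if b then 1 else -1

/-- The Walsh function `w_A(ε) = ∏_{i ∈ A} ε_i`. -/
def walsh {n : ℕ} (A : Finset (Fin n)) (ε : Fin n → Bool) : ℝ := ∏ i ∈ A, sgn (ε i)

/-- The Fourier–Walsh coefficient `f̂(A) = 2⁻ⁿ ∑_δ f(δ) w_A(δ)`. -/
def coeff {n : ℕ} (f : (Fin n → Bool) → X) (A : Finset (Fin n)) : X :=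
  (2 ^ n : ℝ)⁻¹ • ∑ δ : Fin n → Bool, walsh A δ • f δ

/-- `f` has degree at most `d`: `f̂(A) = 0` whenever `|A| > d`. -/
def degLE {n : ℕ} (f : (Fin n → Bool) → X) (d : ℕ) : Prop :=
  ∀ A : Finset (Fin n), d < A.card → coeff f A = 0

/-- `f` belongs to the `d`-th tail space: `f̂(A) = 0` whenever `|A| < d`. -/
def tailSpace {n : ℕ} (f : (Fin n → Bool) → X) (d : ℕ) : Prop :=
  ∀ A : Finset (Fin n), A.card < d → coeff f A = 0

/-- The heat semigroup `e^{-tΔ} f = ∑_A e^{-t|A|} f̂(A) w_A`. -/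
def heat {n : ℕ} (t : ℝ) (f : (Fin n → Bool) → X) : (Fin n → Bool) → X :=
  fun ε => ∑ A : Finset (Fin n), Real.exp (-t * A.card) • walsh A ε • coeff f A

/-- The hypercube Laplacian `Δ f = ∑_A |A| f̂(A) w_A`. -/
def lap {n : ℕ} (f : (Fin n → Bool) → X) : (Fin n → Bool) → X :=
  fun ε => ∑ A : Finset (Fin n), (A.card : ℝ) • walsh A ε • coeff f A

/-- The fractional Laplacian `Δ^γ f = ∑_A |A|^γ f̂(A) w_A`. -/
def fracLap {n : ℕ} (γ : ℝ) (f : (Fin n → Bool) → X) : (Fin n → Bool) → X :=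
  fun ε => ∑ A : Finset (Fin n), ((A.card : ℝ) ^ γ) • walsh A ε • coeff f A

/-- The `i`-th discrete partial derivative. -/
def pderiv {n : ℕ} (i : Fin n) (f : (Fin n → Bool) → X) : (Fin n → Bool) → X :=
  fun ε => (2 : ℝ)⁻¹ • (f ε - f (Function.update ε i (!(ε i))))

/-- The vector-valued `L_p` norm `(2⁻ⁿ ∑_ε ‖f(ε)‖^p)^{1/p}` for finite `p`. -/
def lpNorm {n : ℕ} {Y : Type*} [NormedAddCommGroup Y] (p : ℝ)
    (f : (Fin n → Bool) → Y) : ℝ :=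
  ((2 ^ n : ℝ)⁻¹ * ∑ ε : Fin n → Bool, ‖f ε‖ ^ p) ^ (1 / p)

/-- The `L_∞` norm `max_ε ‖f(ε)‖`. -/
def linfNorm {n : ℕ} {Y : Type*} [NormedAddCommGroup Y]
    (f : (Fin n → Bool) → Y) : ℝ :=
  ⨆ ε : Fin n → Bool, ‖f ε‖

/-- The `L_p` norm for `p ∈ [1,∞]` encoded as `p : ℝ≥0∞`. -/
def lpNormE {n : ℕ} {Y : Type*} [NormedAddCommGroup Y] (p : ℝ≥0∞)
    (f : (Fin n → Bool) → Y) : ℝ :=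
  if p = ⊤ then linfNorm f else lpNorm p.toReal f

/-- The scalar `L_p` norm of the gradient `‖(∑_i |∂_i f|²)^{1/2}‖_{L_p}`. -/
def gradLpNorm {n : ℕ} (p : ℝ) (f : (Fin n → Bool) → ℂ) : ℝ :=
  lpNorm p (fun ε => Real.sqrt (∑ i : Fin n, ‖pderiv i f ε‖ ^ 2))

/-- The Rademacher projection `Rad f(ε) = ∑_i f̂({i}) ε_i`. -/
def Rad {n : ℕ} (f : (Fin n → Bool) → X) : (Fin n → Bool) → X :=
  fun ε => ∑ i : Fin n, sgn (ε i) • coeff f {i}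

/-- A complex Banach space is `K`-convex if the Rademacher projections are uniformly
bounded on `L_q` for some `q ∈ (1,∞)`. -/
def KConvex (X : Type*) [NormedAddCommGroup X] [NormedSpace ℂ X] : Prop :=
  ∃ q : ℝ, 1 < q ∧ ∃ M : ℝ, ∀ (n : ℕ) (f : (Fin n → Bool) → X),
    lpNorm q (Rad f) ≤ M * lpNorm q f

/-- `X` has cotype `q` with constant `C`. -/
def HasCotype (X : Type*) [NormedAddCommGroup X] [NormedSpace ℂ X] (q C : ℝ) : Prop :=
  ∀ (n : ℕ) (x : Fin n → X),
    C⁻¹ * (∑ i : Fin n, ‖x i‖ ^ q) ^ (1 / q) ≤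
      ((2 ^ n : ℝ)⁻¹ * ∑ ε : Fin n → Bool, ‖∑ i : Fin n, sgn (ε i) • x i‖ ^ q) ^ (1 / q)

/-- The entropy `Ent(h)` of a nonnegative function on the cube. -/
def entropy {n : ℕ} (h : (Fin n → Bool) → ℝ) : ℝ :=
  (2 ^ n : ℝ)⁻¹ * ∑ ε : Fin n → Bool, h ε * Real.log (h ε) -
    ((2 ^ n : ℝ)⁻¹ * ∑ ε : Fin n → Bool, h ε) *
      Real.log ((2 ^ n : ℝ)⁻¹ * ∑ ε : Fin n → Bool, h ε)

/-- The `L_∞` norm of the gradient `max_ε (∑_i |∂_i f(ε)|²)^{1/2}`. -/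
def gradLinfNorm {n : ℕ} (f : (Fin n → Bool) → ℂ) : ℝ :=
  ⨆ ε : Fin n → Bool, Real.sqrt (∑ i : Fin n, ‖pderiv i f ε‖ ^ 2)

/-!
The complex noise operator `T_z f = ∑_A z^|A| f̂(A) w_A` contracts `L_p` as soon as the two-point
inequality `‖a + zb‖^p + ‖a - zb‖^p ≤ ‖a + b‖^p + ‖a - b‖^p` holds, and that inequality holds on
`(|p - 2| / p) |1 - z²| ≤ 1 - |z|²`, the lens with vertices `±1` and opening angle `θ`.

If `f` lies in the `d`-th tail space, `z^{-d} T_z f` is a polynomial in `z`. As in Schwarz's lemma,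
the maximum principle compares it with the conformal map of the lens onto the disc, and `z = e^{-t}`
gives the upper bound. If `f` has degree at most `d`, then `z^d T_{1/z} f` is a polynomial in `z`,
and `1/z` runs over the boundary of the lens of angle `θ` when `z` runs over that of the lens of
angle `2π - θ`. The same argument in the larger lens bounds `f = T_{e^t} e^{-tΔ} f` by `e^{-tΔ} f`.
-/

section TwoPoint

theorem sinh_mul_le_mul_sinh {r y : ℝ} (hr₀ : 0 ≤ r) (hr₁ : r ≤ 1) (hy : 0 ≤ y) :
    Real.sinh (r * y) ≤ r * Real.sinh y := by
  have cosh_mono : MonotoneOn (deriv Real.sinh) (interior (Set.Ici 0)) := by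
    intro a ha b hb hab
    rw [interior_Ici, Set.mem_Ioi] at ha hb
    rwa [Real.deriv_sinh, Real.cosh_le_cosh, abs_of_pos ha, abs_of_pos hb]
  have sinh_convex : ConvexOn ℝ (Set.Ici 0) Real.sinh :=
    cosh_mono.convexOn_of_deriv (convex_Ici 0) Real.continuous_sinh.continuousOn
      Real.differentiable_sinh.differentiableOn
  simpa using sinh_convex.2 Set.self_mem_Ici hy (sub_nonneg.2 hr₁) hr₀ (sub_add_cancel 1 r)

theorem rpow_sub_rpow_eq_mul_sinh {q : ℝ} (hq : 0 < q) (a b : ℝ) :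
    q ^ a - q ^ b = 2 * q ^ ((a + b) / 2) * Real.sinh ((a - b) / 2 * Real.log q) := by
  have hadd : Real.log q * ((a + b) / 2) + (a - b) / 2 * Real.log q = Real.log q * a := by ring
  have hsub : Real.log q * ((a + b) / 2) + -((a - b) / 2 * Real.log q) = Real.log q * b := by ring
  rw [Real.sinh_eq, mul_comm 2, mul_assoc, mul_div_cancel₀ _ two_ne_zero, mul_sub,
    Real.rpow_def_of_pos hq, Real.rpow_def_of_pos hq, Real.rpow_def_of_pos hq, ← Real.exp_add,
    ← Real.exp_add, hadd, hsub]

theorem abs_sub_two_div_lt_one {p : ℝ} (hp : 1 < p) : |p - 2| / p < 1 := by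
  rw [div_lt_one (by linarith), abs_lt]
  constructor <;> linarith

theorem abs_sub_rpow_le {p q : ℝ} (hp : 1 < p) (hq₀ : 0 < q) (hq₁ : q ≤ 1) :
    |q - q ^ (p - 1)| ≤ |p - 2| / p * (1 - q ^ p) := by
  have hp₀ : 0 < p := by linarith
  have hlog : 0 ≤ -p / 2 * Real.log q :=
    mul_nonneg_of_nonpos_of_nonpos (by linarith) (Real.log_nonpos hq₀.le hq₁)
  have hleft : |q - q ^ (p - 1)| =
      2 * q ^ (p / 2) * Real.sinh (|p - 2| / p * (-p / 2 * Real.log q)) := by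
    have harg : |(1 - (p - 1)) / 2 * Real.log q| = |p - 2| / p * (-p / 2 * Real.log q) := by
      rw [abs_mul, abs_of_nonpos (Real.log_nonpos hq₀.le hq₁), abs_div, abs_two,
        show 1 - (p - 1) = -(p - 2) by ring, abs_neg]
      field_simp
    have h := rpow_sub_rpow_eq_mul_sinh hq₀ 1 (p - 1)
    rw [Real.rpow_one, add_sub_cancel] at h
    rw [h, abs_mul, abs_of_pos (by positivity), Real.abs_sinh, harg]
  have hright : 1 - q ^ p = 2 * q ^ (p / 2) * Real.sinh (-p / 2 * Real.log q) := by
    simpa using rpow_sub_rpow_eq_mul_sinh hq₀ 0 p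
  rw [hleft, hright, mul_left_comm (|p - 2| / p) (2 * q ^ (p / 2))]
  exact mul_le_mul_of_nonneg_left
    (sinh_mul_le_mul_sinh (div_nonneg (abs_nonneg _) hp₀.le) (abs_sub_two_div_lt_one hp).le hlog)
    (by positivity)

theorem sq_add_sq_add_two_mul_pos {e A B : ℝ} (he : |e| < 1) (hA : 0 < A) :
    0 < A ^ 2 + B ^ 2 + 2 * e * (A * B) := by
  have : 0 < (1 - e ^ 2) * A ^ 2 := mul_pos (by linarith [(sq_lt_one_iff_abs_lt_one e).2 he])
    (by positivity)
  nlinarith [sq_nonneg (B + e * A)]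

theorem one_add_sq_add_two_mul_pos {e : ℝ} (he : |e| < 1) (q : ℝ) :
    0 < 1 + q ^ 2 + 2 * e * q := by
  simpa using sq_add_sq_add_two_mul_pos he one_pos (B := q)

/-- The homogeneous ratio `(A² + B² + 2eAB)^(p/2) / (A^p + B^p)` as a function of `q = B / A`. -/
def quadRatio (p e q : ℝ) : ℝ := (1 + q ^ 2 + 2 * e * q) ^ (p / 2) / (1 + q ^ p)

theorem quadRatio_pos {p e q : ℝ} (he : |e| < 1) (hq : 0 ≤ q) : 0 < quadRatio p e q :=
  div_pos (Real.rpow_pos_of_pos (one_add_sq_add_two_mul_pos he _) _) (by positivity)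

theorem quadRatio_mul {p e A B : ℝ} (he : |e| < 1) (hA : 0 < A) (hB : 0 ≤ B) :
    quadRatio p e (B / A) * (A ^ p + B ^ p) = (A ^ 2 + B ^ 2 + 2 * e * (A * B)) ^ (p / 2) := by
  have hquad : A ^ 2 + B ^ 2 + 2 * e * (A * B) =
      A ^ 2 * (1 + (B / A) ^ 2 + 2 * e * (B / A)) := by
    field_simp
  have hpow : A ^ p + B ^ p = A ^ p * (1 + (B / A) ^ p) := by
    rw [Real.div_rpow hB hA.le, mul_add, mul_one, mul_div_cancel₀ _ (by positivity)]
  have hA_pow : (A ^ 2) ^ (p / 2) = A ^ p := by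
    rw [← Real.rpow_natCast_mul hA.le, Nat.cast_ofNat, mul_div_cancel₀ _ two_ne_zero]
  have hden : 1 + (B / A) ^ p ≠ 0 := by positivity
  rw [hquad, hpow, Real.mul_rpow (by positivity) (one_add_sq_add_two_mul_pos he _).le,
    hA_pow, quadRatio]
  field_simp

theorem hasDerivAt_quadRatio {p e q : ℝ} (he : |e| < 1) (hq : 0 < q) :
    HasDerivAt (quadRatio p e)
      (p * (1 + q ^ 2 + 2 * e * q) ^ (p / 2 - 1) / (1 + q ^ p) ^ 2 *
        ((q - q ^ (p - 1)) + e * (1 - q ^ p))) q := by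
  have hN := one_add_sq_add_two_mul_pos he q
  have hquad : HasDerivAt (fun q : ℝ ↦ 1 + q ^ 2 + 2 * e * q) (2 * q + 2 * e) q := by
    simpa using ((hasDerivAt_pow 2 q).const_add 1).fun_add ((hasDerivAt_id' q).const_mul (2 * e))
  have hpow := (Real.hasDerivAt_rpow_const (p := p) (Or.inl hq.ne')).const_add 1
  refine ((hquad.rpow_const (p := p / 2) (Or.inl hN.ne')).div hpow (by positivity)).congr_deriv ?_
  have hq_pow : q ^ p = q * q ^ (p - 1) := by
    rw [Real.rpow_sub_one hq.ne', mul_div_cancel₀ _ hq.ne']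
  have hN_pow := Real.rpow_sub_one hN.ne' (p / 2)
  rw [eq_div_iff hN.ne'] at hN_pow
  rw [div_mul_eq_mul_div, ← hN_pow, hq_pow]
  ring

theorem continuousOn_quadRatio {p e : ℝ} (hp : 0 < p) (he : |e| < 1) :
    ContinuousOn (quadRatio p e) (Set.Icc 0 1) := by
  have hpow : Continuous fun q : ℝ ↦ q ^ p := Real.continuous_rpow_const hp.le
  refine ContinuousOn.div (ContinuousOn.rpow_const (by fun_prop) fun q _ ↦
    Or.inl (one_add_sq_add_two_mul_pos he _).ne') (by fun_prop) fun q hq ↦ ?_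
  have := Real.rpow_nonneg hq.1 p
  positivity

theorem deriv_quadRatio_factor_nonneg {p e q : ℝ} (hp : 0 < p) (he : |e| < 1) :
    0 ≤ p * (1 + q ^ 2 + 2 * e * q) ^ (p / 2 - 1) / (1 + q ^ p) ^ 2 := by
  have := one_add_sq_add_two_mul_pos he q
  positivity

theorem monotoneOn_quadRatio {p : ℝ} (hp : 1 < p) :
    MonotoneOn (quadRatio p (|p - 2| / p)) (Set.Icc 0 1) := by
  have hp₀ : 0 < p := by linarith
  have he : |(|p - 2| / p)| < 1 := by
    rw [abs_of_nonneg (by positivity)]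
    exact abs_sub_two_div_lt_one hp
  refine monotoneOn_of_hasDerivWithinAt_nonneg (convex_Icc 0 1) (continuousOn_quadRatio hp₀ he)
    (fun q hq ↦ (hasDerivAt_quadRatio he (interior_Icc.subset hq).1).hasDerivWithinAt)
    fun q hq ↦ mul_nonneg (deriv_quadRatio_factor_nonneg hp₀ he) ?_
  rw [interior_Icc] at hq
  linarith [neg_abs_le (q - q ^ (p - 1)), abs_sub_rpow_le hp hq.1 hq.2.le]

theorem antitoneOn_quadRatio {p : ℝ} (hp : 1 < p) :
    AntitoneOn (quadRatio p (-(|p - 2| / p))) (Set.Icc 0 1) := by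
  have hp₀ : 0 < p := by linarith
  have he : |-(|p - 2| / p)| < 1 := by
    rw [abs_neg, abs_of_nonneg (by positivity)]
    exact abs_sub_two_div_lt_one hp
  refine antitoneOn_of_hasDerivWithinAt_nonpos (convex_Icc 0 1) (continuousOn_quadRatio hp₀ he)
    (fun q hq ↦ (hasDerivAt_quadRatio he (interior_Icc.subset hq).1).hasDerivWithinAt)
    fun q hq ↦ mul_nonpos_of_nonneg_of_nonpos (deriv_quadRatio_factor_nonneg hp₀ he) ?_
  rw [interior_Icc] at hq
  linarith [le_abs_self (q - q ^ (p - 1)), abs_sub_rpow_le hp hq.1 hq.2.le]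

theorem rpow_add_rpow_le_of_quadRatio_le {p e A B A' B' : ℝ} (hp : 0 ≤ p) (he : |e| < 1)
    (hA : 0 < A) (hA' : 0 < A') (hB : 0 ≤ B) (hB' : 0 ≤ B')
    (hratio : quadRatio p e (B / A) ≤ quadRatio p e (B' / A'))
    (hquad : A' ^ 2 + B' ^ 2 + 2 * e * (A' * B') ≤ A ^ 2 + B ^ 2 + 2 * e * (A * B)) :
    A' ^ p + B' ^ p ≤ A ^ p + B ^ p := by
  refine le_of_mul_le_mul_left ?_ (quadRatio_pos (p := p) he (div_nonneg hB' hA'.le))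
  calc quadRatio p e (B' / A') * (A' ^ p + B' ^ p)
      = (A' ^ 2 + B' ^ 2 + 2 * e * (A' * B')) ^ (p / 2) := quadRatio_mul he hA' hB'
    _ ≤ (A ^ 2 + B ^ 2 + 2 * e * (A * B)) ^ (p / 2) :=
      Real.rpow_le_rpow (sq_add_sq_add_two_mul_pos he hA').le hquad (by positivity)
    _ = quadRatio p e (B / A) * (A ^ p + B ^ p) := (quadRatio_mul he hA hB).symm
    _ ≤ quadRatio p e (B' / A') * (A ^ p + B ^ p) :=
      mul_le_mul_of_nonneg_right hratio (by positivity)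

-- The order of the two ratios decides which sign of `e = ±|p - 2| / p` makes `quadRatio`
-- monotone in the required direction, and `h` is the comparison of the quadratic forms for both.
theorem rpow_add_rpow_le_of_pos {p A B A' B' : ℝ} (hp : 1 < p) (hA : 0 < A) (hA' : 0 < A')
    (hB : 0 ≤ B) (hB' : 0 ≤ B') (hBA : B ≤ A) (hBA' : B' ≤ A')
    (h : |p - 2| / p * |A * B - A' * B'| * 2 ≤ (A ^ 2 + B ^ 2) - (A' ^ 2 + B' ^ 2)) :
    A' ^ p + B' ^ p ≤ A ^ p + B ^ p := by
  have hp₀ : 0 < p := by linarith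
  have hc₀ : 0 ≤ |p - 2| / p := by positivity
  have hc : |(|p - 2| / p)| < 1 := by
    rw [abs_of_nonneg hc₀]
    exact abs_sub_two_div_lt_one hp
  have hq : B / A ∈ Set.Icc (0 : ℝ) 1 := ⟨by positivity, div_le_one_of_le₀ hBA hA.le⟩
  have hq' : B' / A' ∈ Set.Icc (0 : ℝ) 1 := ⟨by positivity, div_le_one_of_le₀ hBA' hA'.le⟩
  rcases le_total (B / A) (B' / A') with hle | hle
  · refine rpow_add_rpow_le_of_quadRatio_le hp₀.le hc hA hA' hB hB'
      (monotoneOn_quadRatio hp hq hq' hle) ?_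
    linarith [mul_le_mul_of_nonneg_left (neg_abs_le (A * B - A' * B')) hc₀]
  · refine rpow_add_rpow_le_of_quadRatio_le hp₀.le (by rwa [abs_neg]) hA hA' hB hB'
      (antitoneOn_quadRatio hp hq' hq hle) ?_
    linarith [mul_le_mul_of_nonneg_left (le_abs_self (A * B - A' * B')) hc₀]

theorem rpow_add_rpow_le {p A B A' B' : ℝ} (hp : 1 < p) (hA : 0 ≤ A) (hA' : 0 ≤ A')
    (hB : 0 ≤ B) (hB' : 0 ≤ B')
    (h : |p - 2| / p * |A * B - A' * B'| * 2 ≤ (A ^ 2 + B ^ 2) - (A' ^ 2 + B' ^ 2)) :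
    A' ^ p + B' ^ p ≤ A ^ p + B ^ p := by
  wlog hBA : B ≤ A generalizing A B
  · rw [add_comm (A ^ p)]
    exact this hB hA (by rw [mul_comm B A]; linarith) (le_of_not_ge hBA)
  wlog hBA' : B' ≤ A' generalizing A' B'
  · rw [add_comm (A' ^ p)]
    exact this hB' hA' (by rw [mul_comm B' A']; linarith) (le_of_not_ge hBA')
  rcases hA'.eq_or_lt with rfl | hA'_pos
  · obtain rfl : B' = 0 := le_antisymm hBA' hB'
    rw [Real.zero_rpow (by linarith), add_zero]
    positivity
  have hA_pos : 0 < A := by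
    refine hA.lt_of_ne' fun hA_zero ↦ ?_
    obtain rfl : B = 0 := le_antisymm (hA_zero ▸ hBA) hB
    have : 0 ≤ |p - 2| / p * |A * 0 - A' * B'| * 2 := by positivity
    nlinarith
  exact rpow_add_rpow_le_of_pos hp hA_pos hA'_pos hB hB' hBA hBA' h

theorem norm_add_rpow_add_norm_sub_rpow_le {p : ℝ} (hp : 1 < p) {z : ℂ}
    (hz : |p - 2| / p * ‖1 - z ^ 2‖ ≤ 1 - ‖z‖ ^ 2) (a b : ℂ) :
    ‖a + z * b‖ ^ p + ‖a - z * b‖ ^ p ≤ ‖a + b‖ ^ p + ‖a - b‖ ^ p := by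
  refine rpow_add_rpow_le hp (norm_nonneg _) (norm_nonneg _) (norm_nonneg _) (norm_nonneg _) ?_
  have hprod : |‖a + b‖ * ‖a - b‖ - ‖a + z * b‖ * ‖a - z * b‖| ≤ ‖1 - z ^ 2‖ * ‖b‖ ^ 2 := by
    calc |‖a + b‖ * ‖a - b‖ - ‖a + z * b‖ * ‖a - z * b‖|
        = |‖(a + b) * (a - b)‖ - ‖(a + z * b) * (a - z * b)‖| := by rw [norm_mul, norm_mul]
      _ ≤ ‖(a + b) * (a - b) - (a + z * b) * (a - z * b)‖ := abs_norm_sub_norm_le _ _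
      _ = ‖-((1 - z ^ 2) * b ^ 2)‖ := by congr 1; ring
      _ = ‖1 - z ^ 2‖ * ‖b‖ ^ 2 := by rw [norm_neg, norm_mul, norm_pow]
  calc |p - 2| / p * |‖a + b‖ * ‖a - b‖ - ‖a + z * b‖ * ‖a - z * b‖| * 2
      ≤ |p - 2| / p * (‖1 - z ^ 2‖ * ‖b‖ ^ 2) * 2 := by gcongr
    _ ≤ (1 - ‖z‖ ^ 2) * ‖b‖ ^ 2 * 2 := by rw [← mul_assoc]; gcongr
    _ = (‖a + b‖ ^ 2 + ‖a - b‖ ^ 2) - (‖a + z * b‖ ^ 2 + ‖a - z * b‖ ^ 2) := by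
      rw [parallelogram_law_with_norm ℝ, parallelogram_law_with_norm ℝ, norm_mul]
      ring

end TwoPoint

section Cube

variable {n : ℕ}

theorem sgn_not (b : Bool) : sgn (!b) = -sgn b := by cases b <;> simp [sgn]

theorem sgn_mul_self (b : Bool) : sgn b * sgn b = 1 := by cases b <;> simp [sgn]

theorem sgn_mul_sgn_of_ne {a b : Bool} (h : a ≠ b) : sgn a * sgn b = -1 := by
  rw [Bool.eq_not_of_ne h, sgn_not, neg_mul, sgn_mul_self]

/-- The point `ε` of the cube with its `i`-th coordinate reversed. -/
def flipAt (i : Fin n) (ε : Fin n → Bool) : Fin n → Bool := Function.update ε i (!ε i)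

theorem flipAt_involutive (i : Fin n) : Function.Involutive (flipAt i) := fun ε ↦ by simp [flipAt]

theorem sum_flipAt (i : Fin n) (g : (Fin n → Bool) → ℝ) : ∑ ε, g (flipAt i ε) = ∑ ε, g ε :=
  Equiv.sum_comp (flipAt_involutive i).toPerm g

theorem walsh_flipAt (i : Fin n) (A : Finset (Fin n)) (ε : Fin n → Bool) :
    walsh A (flipAt i ε) = if i ∈ A then -walsh A ε else walsh A ε := by
  have hne : ∀ j ≠ i, sgn (flipAt i ε j) = sgn (ε j) := fun j hj ↦ by
    rw [flipAt, Function.update_of_ne hj]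
  unfold walsh
  split_ifs with hi
  · rw [← Finset.mul_prod_erase A _ hi, ← Finset.mul_prod_erase A (fun j ↦ sgn (ε j)) hi,
      Finset.prod_congr rfl fun j hj ↦ hne j (Finset.ne_of_mem_erase hj), flipAt,
      Function.update_self, sgn_not, neg_mul]
  · exact Finset.prod_congr rfl fun j hj ↦ hne j (ne_of_mem_of_not_mem hj hi)

theorem sum_finset_walsh_mul_walsh (ε δ : Fin n → Bool) :
    ∑ A, walsh A ε * walsh A δ = if ε = δ then 2 ^ n else 0 := by
  have hprod : ∑ A, walsh A ε * walsh A δ = ∏ i, (1 + sgn (ε i) * sgn (δ i)) := by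
    simp only [walsh, ← Finset.prod_mul_distrib, Finset.prod_one_add, Finset.powerset_univ]
  rw [hprod]
  split_ifs with h
  · simp [h, sgn_mul_self, one_add_one_eq_two]
  · obtain ⟨i, hi⟩ := Function.ne_iff.1 h
    exact Finset.prod_eq_zero (Finset.mem_univ i) (by rw [sgn_mul_sgn_of_ne hi, add_neg_cancel])

theorem sum_walsh_mul_walsh (A B : Finset (Fin n)) :
    ∑ ε, walsh A ε * walsh B ε = if A = B then 2 ^ n else 0 := by
  split_ifs with h
  · simp [h, walsh, ← Finset.prod_mul_distrib, sgn_mul_self]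
  · obtain ⟨i, hi⟩ : ∃ i, ¬(i ∈ A ↔ i ∈ B) := by simpa [Finset.ext_iff] using h
    have hneg : ∀ ε, walsh A (flipAt i ε) * walsh B (flipAt i ε) = -(walsh A ε * walsh B ε) := by
      intro ε
      rw [walsh_flipAt, walsh_flipAt]
      split_ifs <;> first | (exfalso; tauto) | ring1
    have hflip := sum_flipAt i fun ε ↦ walsh A ε * walsh B ε
    simp only [hneg, Finset.sum_neg_distrib] at hflip
    linarith

theorem sum_walsh_smul_coeff (f : (Fin n → Bool) → X) (ε : Fin n → Bool) :
    ∑ A, walsh A ε • coeff f A = f ε := by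
  calc ∑ A, walsh A ε • coeff f A
      = (2 ^ n : ℝ)⁻¹ • ∑ δ, (∑ A, walsh A ε * walsh A δ) • f δ := by
        simp only [coeff, Finset.smul_sum, Finset.sum_smul, smul_smul]
        rw [Finset.sum_comm]
        exact Finset.sum_congr rfl fun δ _ ↦ Finset.sum_congr rfl fun A _ ↦ by ring_nf
    _ = f ε := by simp [sum_finset_walsh_mul_walsh, ite_smul]

theorem coeff_sum_walsh_smul (c : Finset (Fin n) → X) (A : Finset (Fin n)) :
    coeff (fun ε ↦ ∑ B, walsh B ε • c B) A = c A := by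
  calc coeff (fun ε ↦ ∑ B, walsh B ε • c B) A
      = (2 ^ n : ℝ)⁻¹ • ∑ B, (∑ ε, walsh A ε * walsh B ε) • c B := by
        simp only [coeff, Finset.smul_sum, Finset.sum_smul, smul_smul]
        rw [Finset.sum_comm]
    _ = c A := by simp [sum_walsh_mul_walsh, ite_smul]

/-- The Walsh multiplier `f ↦ ∑_A m(A) f̂(A) w_A` with symbol `m`. -/
def multiplier (m : Finset (Fin n) → ℂ) (f : (Fin n → Bool) → X) : (Fin n → Bool) → X :=
  fun ε ↦ ∑ A, walsh A ε • m A • coeff f A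

theorem coeff_multiplier (m : Finset (Fin n) → ℂ) (f : (Fin n → Bool) → X)
    (A : Finset (Fin n)) : coeff (multiplier m f) A = m A • coeff f A :=
  coeff_sum_walsh_smul _ A

theorem multiplier_one (f : (Fin n → Bool) → X) : multiplier (fun _ ↦ 1) f = f := by
  funext ε
  simp only [multiplier, one_smul, sum_walsh_smul_coeff]

theorem multiplier_multiplier (m m' : Finset (Fin n) → ℂ) (f : (Fin n → Bool) → X) :
    multiplier m (multiplier m' f) = multiplier (fun A ↦ m A * m' A) f := by
  funext ε
  simp only [multiplier, ← smul_smul]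
  exact Finset.sum_congr rfl fun A _ ↦ by rw [← coeff_multiplier m' f A]

theorem smul_multiplier (c : ℂ) (m : Finset (Fin n) → ℂ) (f : (Fin n → Bool) → X) :
    c • multiplier m f = multiplier (fun A ↦ c * m A) f := by
  funext ε
  simp only [Pi.smul_apply, multiplier, Finset.smul_sum, mul_smul]
  exact Finset.sum_congr rfl fun A _ ↦ smul_comm _ _ _

theorem multiplier_congr {m m' : Finset (Fin n) → ℂ} {f : (Fin n → Bool) → X}
    (h : ∀ A, coeff f A ≠ 0 → m A = m' A) : multiplier m f = multiplier m' f := by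
  funext ε
  refine Finset.sum_congr rfl fun A _ ↦ ?_
  by_cases hA : coeff f A = 0
  · simp only [hA, smul_zero]
  · rw [h A hA]

/-- The noise operator `f ↦ ∑_A z^|A| f̂(A) w_A` with complex parameter `z`. -/
def noise (z : ℂ) : ((Fin n → Bool) → X) → (Fin n → Bool) → X := multiplier fun A ↦ z ^ A.card

theorem heat_eq_noise (t : ℝ) (f : (Fin n → Bool) → X) : heat t f = noise (Real.exp (-t)) f := by
  funext ε
  refine Finset.sum_congr rfl fun A _ ↦ ?_
  simp only [← Complex.ofReal_pow, Complex.coe_smul]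
  rw [smul_comm, mul_comm, Real.exp_nat_mul]

theorem noise_inv_noise {z : ℂ} (hz : z ≠ 0) (f : (Fin n → Bool) → X) :
    noise z⁻¹ (noise z f) = f := by
  rw [noise, noise, multiplier_multiplier]
  simp only [← mul_pow, inv_mul_cancel₀ hz, one_pow, multiplier_one]

theorem heat_zero (f : (Fin n → Bool) → X) : heat 0 f = f := by
  simp only [heat_eq_noise, noise, neg_zero, Real.exp_zero, Complex.ofReal_one, one_pow,
    multiplier_one]

theorem degLE_heat {f : (Fin n → Bool) → X} {d : ℕ} (hf : degLE f d) (t : ℝ) :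
    degLE (heat t f) d := fun A hA ↦ by
  rw [heat_eq_noise, noise, coeff_multiplier, hf A hA, smul_zero]

theorem noise_eq_pow_smul_of_tailSpace {f : (Fin n → Bool) → X} {d : ℕ} (hf : tailSpace f d)
    (z : ℂ) : noise z f = z ^ d • multiplier (fun A ↦ z ^ (A.card - d)) f := by
  rw [smul_multiplier]
  refine multiplier_congr fun A hA ↦ ?_
  rw [← pow_add, Nat.add_sub_cancel' (not_lt.1 (mt (hf A) hA))]

theorem noise_inv_eq_zpow_smul_of_degLE {f : (Fin n → Bool) → X} {d : ℕ} (hf : degLE f d) {z : ℂ}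
    (hz : z ≠ 0) : noise z⁻¹ f = z ^ (-d : ℤ) • multiplier (fun A ↦ z ^ (d - A.card)) f := by
  rw [smul_multiplier]
  refine multiplier_congr fun A hA ↦ ?_
  rw [pow_sub₀ z hz (not_lt.1 (mt (hf A) hA)), zpow_neg, zpow_natCast, inv_pow,
    inv_mul_cancel_left₀ (pow_ne_zero d hz)]

/-- The noise operator acting on the coordinates in `I` only. -/
def partialNoise (z : ℂ) (I : Finset (Fin n)) : ((Fin n → Bool) → X) → (Fin n → Bool) → X :=
  multiplier fun A ↦ z ^ (A ∩ I).card

theorem partialNoise_empty (z : ℂ) (f : (Fin n → Bool) → X) : partialNoise z ∅ f = f := by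
  simp only [partialNoise, Finset.inter_empty, Finset.card_empty, pow_zero, multiplier_one]

theorem partialNoise_univ (z : ℂ) (f : (Fin n → Bool) → X) :
    partialNoise z Finset.univ f = noise z f := by
  simp only [partialNoise, noise, Finset.inter_univ]

theorem partialNoise_insert {i : Fin n} {I : Finset (Fin n)} (hi : i ∉ I) (z : ℂ)
    (f : (Fin n → Bool) → X) (ε : Fin n → Bool) :
    partialNoise z (insert i I) f ε =
      (2⁻¹ : ℂ) • (partialNoise z I f ε + partialNoise z I f (flipAt i ε)) +
        z • (2⁻¹ : ℂ) • (partialNoise z I f ε - partialNoise z I f (flipAt i ε)) := by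
  simp only [partialNoise, multiplier, ← Finset.sum_add_distrib, ← Finset.sum_sub_distrib,
    Finset.smul_sum]
  refine Finset.sum_congr rfl fun A _ ↦ ?_
  rw [walsh_flipAt]
  split_ifs with hA
  · rw [Finset.inter_insert_of_mem hA, Finset.card_insert_of_notMem (by simp [hi]), pow_succ']
    module
  · rw [Finset.inter_insert_of_notMem hA]
    module

theorem sum_norm_partialNoise_insert_rpow_le {p : ℝ} {z : ℂ}
    (htwo : ∀ a b : X, ‖a + z • b‖ ^ p + ‖a - z • b‖ ^ p ≤ ‖a + b‖ ^ p + ‖a - b‖ ^ p)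
    {i : Fin n} {I : Finset (Fin n)} (hi : i ∉ I) (f : (Fin n → Bool) → X) :
    ∑ ε, ‖partialNoise z (insert i I) f ε‖ ^ p ≤ ∑ ε, ‖partialNoise z I f ε‖ ^ p := by
  have hpair : ∀ ε, ‖partialNoise z (insert i I) f ε‖ ^ p +
      ‖partialNoise z (insert i I) f (flipAt i ε)‖ ^ p ≤
        ‖partialNoise z I f ε‖ ^ p + ‖partialNoise z I f (flipAt i ε)‖ ^ p := by
    intro ε
    set u := partialNoise z I f ε
    set v := partialNoise z I f (flipAt i ε)
    have hflip : partialNoise z (insert i I) f (flipAt i ε) =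
        (2⁻¹ : ℂ) • (u + v) - z • (2⁻¹ : ℂ) • (u - v) := by
      rw [partialNoise_insert hi, flipAt_involutive]
      module
    have hu : (2⁻¹ : ℂ) • (u + v) + (2⁻¹ : ℂ) • (u - v) = u := by module
    have hv : (2⁻¹ : ℂ) • (u + v) - (2⁻¹ : ℂ) • (u - v) = v := by module
    rw [partialNoise_insert hi, hflip]
    simpa only [hu, hv] using htwo ((2⁻¹ : ℂ) • (u + v)) ((2⁻¹ : ℂ) • (u - v))
  have hsum := Finset.sum_le_sum fun ε (_ : ε ∈ Finset.univ) ↦ hpair ε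
  rw [Finset.sum_add_distrib, Finset.sum_add_distrib,
    sum_flipAt i fun ε ↦ ‖partialNoise z (insert i I) f ε‖ ^ p,
    sum_flipAt i fun ε ↦ ‖partialNoise z I f ε‖ ^ p] at hsum
  linarith

theorem lpNorm_noise_le {p : ℝ} (hp : 0 ≤ p) {z : ℂ}
    (htwo : ∀ a b : X, ‖a + z • b‖ ^ p + ‖a - z • b‖ ^ p ≤ ‖a + b‖ ^ p + ‖a - b‖ ^ p)
    (f : (Fin n → Bool) → X) : lpNorm p (noise z f) ≤ lpNorm p f := by
  have hsum : ∀ I, ∑ ε, ‖partialNoise z I f ε‖ ^ p ≤ ∑ ε, ‖f ε‖ ^ p := fun I ↦ by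
    induction I using Finset.induction_on with
    | empty => rw [partialNoise_empty]
    | insert i I hi ih => exact (sum_norm_partialNoise_insert_rpow_le htwo hi f).trans ih
  rw [← partialNoise_univ]
  unfold lpNorm
  have := hsum Finset.univ
  gcongr

theorem lpNorm_eq_mul_norm_toLp {Y : Type*} [NormedAddCommGroup Y] {p : ℝ} (hp : 0 < p)
    (f : (Fin n → Bool) → Y) :
    lpNorm p f = ((2 ^ n : ℝ)⁻¹) ^ (1 / p) * ‖WithLp.toLp (ENNReal.ofReal p) f‖ := by
  have hp_toReal : (ENNReal.ofReal p).toReal = p := ENNReal.toReal_ofReal hp.le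
  rw [PiLp.norm_eq_sum (by rwa [hp_toReal]), hp_toReal, lpNorm,
    Real.mul_rpow (by positivity) (by positivity)]

theorem differentiable_toLp_multiplier_pow (q : ℝ≥0∞) [Fact (1 ≤ q)] (k : Finset (Fin n) → ℕ)
    (f : (Fin n → Bool) → X) :
    Differentiable ℂ fun z : ℂ ↦ WithLp.toLp q (multiplier (fun A ↦ z ^ k A) f) := by
  have hsum : (fun z : ℂ ↦ WithLp.toLp q (multiplier (fun A ↦ z ^ k A) f)) =
      fun z ↦ ∑ A, z ^ k A • WithLp.toLp q fun ε ↦ walsh A ε • coeff f A := by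
    funext z
    ext ε
    simp only [multiplier, WithLp.ofLp_sum, WithLp.ofLp_smul, Finset.sum_apply, Pi.smul_apply]
    exact Finset.sum_congr rfl fun A _ ↦ smul_comm (walsh A ε) (z ^ k A) (coeff f A)
  rw [hsum]
  exact Differentiable.fun_sum fun A _ ↦ (differentiable_id.pow (k A)).smul_const _

end Cube

section ConformalMap

open Bornology Filter Topology

theorem add_one_ne_zero_of_re_nonneg {ω : ℂ} (hω : 0 ≤ ω.re) : ω + 1 ≠ 0 := fun h ↦ by
  have := congrArg Complex.re h
  simp only [Complex.add_re, Complex.one_re, Complex.zero_re] at this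
  linarith

/-- The Cayley transform, which maps the right half-plane onto the unit disc and `1` to `0`. -/
def cayley (w : ℂ) : ℂ := (w - 1) / (w + 1)

theorem cayley_eq_zero_iff {w : ℂ} (hw : w + 1 ≠ 0) : cayley w = 0 ↔ w = 1 := by
  rw [cayley, div_eq_zero_iff, or_iff_left hw, sub_eq_zero]

theorem mul_norm_one_sub_cayley_sq {w : ℂ} {c : ℝ} (hw : w + 1 ≠ 0) (hc : w.re = ‖w‖ * c) :
    c * ‖1 - cayley w ^ 2‖ = 1 - ‖cayley w‖ ^ 2 := by
  have hw' : ‖w + 1‖ ≠ 0 := norm_ne_zero_iff.2 hw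
  have hre : (1 - ‖cayley w‖ ^ 2) * ‖w + 1‖ ^ 2 = 4 * w.re := by
    rw [cayley, norm_div, div_pow, sub_mul, one_mul, div_mul_cancel₀ _ (pow_ne_zero 2 hw'),
      Complex.sq_norm, Complex.sq_norm, Complex.normSq_apply, Complex.normSq_apply]
    simp only [Complex.add_re, Complex.add_im, Complex.sub_re, Complex.sub_im, Complex.one_re,
      Complex.one_im]
    ring
  have hnorm : ‖1 - cayley w ^ 2‖ * ‖w + 1‖ ^ 2 = 4 * ‖w‖ := by
    have h : (1 - cayley w ^ 2) * (w + 1) ^ 2 = 4 * w := by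
      rw [cayley]
      field_simp
      ring
    rw [← norm_pow, ← norm_mul, h, norm_mul, Complex.norm_ofNat]
  refine mul_right_cancel₀ (pow_ne_zero 2 hw') ?_
  rw [hre, hc, mul_assoc, hnorm]
  ring

theorem norm_cayley_of_re_eq_zero {w : ℂ} (hw : w.re = 0) : ‖cayley w‖ = 1 := by
  have h := mul_norm_one_sub_cayley_sq (c := 0) (add_one_ne_zero_of_re_nonneg hw.ge)
    (by rw [hw, mul_zero])
  rw [zero_mul] at h
  exact (pow_eq_one_iff_of_nonneg (norm_nonneg _) two_ne_zero).1 (by linarith)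

theorem tendsto_cayley_cobounded : Tendsto cayley (cobounded ℂ) (𝓝 1) := by
  have hadd : Tendsto (fun w : ℂ ↦ w + 1) (cobounded ℂ) (cobounded ℂ) :=
    tendsto_add_const_cobounded 1
  have h : Tendsto (fun w : ℂ ↦ 1 - 2 * (w + 1)⁻¹) (cobounded ℂ) (𝓝 (1 - 2 * 0)) :=
    ((tendsto_inv₀_cobounded.comp hadd).const_mul 2).const_sub 1
  rw [mul_zero, sub_zero] at h
  refine h.congr' ?_
  filter_upwards [hadd.eventually (eventually_ne_cobounded 0)] with w hw
  rw [cayley]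
  field_simp
  ring

theorem cayley_ofReal_div {a b : ℝ} (hb : b ≠ 0) :
    cayley ((a / b : ℝ) : ℂ) = ((a - b) / (a + b) : ℝ) := by
  have hb' : (b : ℂ) ≠ 0 := Complex.ofReal_ne_zero.2 hb
  rw [cayley]
  push_cast
  rw [div_sub_one hb', div_add_one hb', div_div_div_cancel_right₀ hb']

theorem norm_cayley_ofReal_rpow {a b κ : ℝ} (hκ : 0 ≤ κ) (hb : 0 < b) (hba : b ≤ a) :
    ‖cayley (((a / b) ^ κ : ℝ) : ℂ)‖ = (a ^ κ - b ^ κ) / (a ^ κ + b ^ κ) := by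
  have ha : 0 < a := hb.trans_le hba
  have hpow : b ^ κ ≤ a ^ κ := Real.rpow_le_rpow hb.le hba hκ
  rw [Real.div_rpow ha.le hb.le, cayley_ofReal_div (by positivity), Complex.norm_real,
    Real.norm_of_nonneg (div_nonneg (sub_nonneg.2 hpow) (by positivity))]

theorem abs_log_mul_ofReal_im_lt_pi {κ : ℝ} (hκ : |κ| < 2) {ω : ℂ} (hω : 0 ≤ ω.re) :
    |(Complex.log ω * κ).im| < Real.pi := by
  rw [Complex.im_mul_ofReal, Complex.log_im, abs_mul]
  calc |ω.arg| * |κ| ≤ Real.pi / 2 * |κ| := by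
        gcongr
        exact Complex.abs_arg_le_pi_div_two_iff.2 hω
    _ < Real.pi / 2 * 2 := by gcongr
    _ = Real.pi := div_mul_cancel₀ _ two_ne_zero

theorem log_cpow_ofReal {κ : ℝ} (hκ : |κ| < 2) {ω : ℂ} (hω : 0 ≤ ω.re) (hω₀ : ω ≠ 0) :
    Complex.log (ω ^ (κ : ℂ)) = Complex.log ω * κ := by
  have him := abs_lt.1 (abs_log_mul_ofReal_im_lt_pi hκ hω)
  rw [Complex.cpow_def_of_ne_zero hω₀, Complex.log_exp him.1 him.2.le]

theorem cpow_ofReal_add_one_ne_zero {κ : ℝ} (hκ₀ : κ ≠ 0) (hκ : |κ| < 2) {ω : ℂ} (hω : 0 ≤ ω.re) :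
    ω ^ (κ : ℂ) + 1 ≠ 0 := by
  rcases eq_or_ne ω 0 with rfl | hω₀
  · rw [Complex.zero_cpow (Complex.ofReal_ne_zero.2 hκ₀), zero_add]
    exact one_ne_zero
  intro h
  have him := abs_log_mul_ofReal_im_lt_pi hκ hω
  rw [← log_cpow_ofReal hκ hω hω₀, eq_neg_of_add_eq_zero_left h, Complex.log_im,
    Complex.arg_neg_one, abs_of_pos Real.pi_pos] at him
  exact him.false

theorem cpow_ofReal_eq_one_iff {κ : ℝ} (hκ₀ : κ ≠ 0) (hκ : |κ| < 2) {ω : ℂ} (hω : 0 ≤ ω.re) :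
    ω ^ (κ : ℂ) = 1 ↔ ω = 1 := by
  refine ⟨fun h ↦ ?_, fun h ↦ by rw [h, Complex.one_cpow]⟩
  have hκ' : (κ : ℂ) ≠ 0 := Complex.ofReal_ne_zero.2 hκ₀
  have hω₀ : ω ≠ 0 := by
    rintro rfl
    exact zero_ne_one ((Complex.zero_cpow hκ').symm.trans h)
  have hlog := log_cpow_ofReal hκ hω hω₀
  rw [h, Complex.log_one, zero_eq_mul, or_iff_left hκ'] at hlog
  rw [← Complex.exp_log hω₀, hlog, Complex.exp_zero]

theorem cpow_ofReal_re_of_re_eq_zero {κ : ℝ} (hκ : κ ≠ 0) {ω : ℂ} (hω : ω.re = 0) :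
    (ω ^ (κ : ℂ)).re = ‖ω ^ (κ : ℂ)‖ * Real.cos (Real.pi / 2 * κ) := by
  rw [Complex.cpow_ofReal_re, Complex.norm_cpow_real]
  rcases lt_trichotomy ω.im 0 with him | him | him
  · rw [Complex.arg_eq_neg_pi_div_two_iff.2 ⟨hω, him⟩, neg_mul, Real.cos_neg]
  · rw [Complex.ext (z := ω) (w := 0) hω him, norm_zero, Real.zero_rpow hκ, zero_mul, zero_mul]
  · rw [Complex.arg_eq_pi_div_two_iff.2 ⟨hω, him⟩]

/-- The conformal map of the right half-plane onto the lens with vertices `±1`, opening angle `α`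
and axis `(-1, 1)`. -/
def lensMap (α : ℝ) (ω : ℂ) : ℂ := cayley (ω ^ ((α / Real.pi : ℝ) : ℂ))

theorem abs_div_pi_lt_two {α : ℝ} (hα₀ : 0 < α) (hα : α < 2 * Real.pi) : |α / Real.pi| < 2 := by
  rwa [abs_of_pos (div_pos hα₀ Real.pi_pos), div_lt_iff₀ Real.pi_pos]

theorem lensMap_eq_zero_iff {α : ℝ} (hα₀ : 0 < α) (hα : α < 2 * Real.pi) {ω : ℂ} (hω : 0 ≤ ω.re) :
    lensMap α ω = 0 ↔ ω = 1 := by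
  have hκ₀ := (div_pos hα₀ Real.pi_pos).ne'
  have hκ := abs_div_pi_lt_two hα₀ hα
  rw [lensMap, cayley_eq_zero_iff (cpow_ofReal_add_one_ne_zero hκ₀ hκ hω),
    cpow_ofReal_eq_one_iff hκ₀ hκ hω]

theorem lensMap_ne_zero_of_re_eq_zero {α : ℝ} (hα₀ : 0 < α) (hα : α < 2 * Real.pi) {ω : ℂ}
    (hω : ω.re = 0) : lensMap α ω ≠ 0 := by
  rw [Ne, lensMap_eq_zero_iff hα₀ hα hω.ge]
  rintro rfl
  exact one_ne_zero hω

theorem lensMap_one (α : ℝ) : lensMap α 1 = 0 := by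
  rw [lensMap, Complex.one_cpow, cayley, sub_self, zero_div]

theorem hasDerivAt_lensMap_one (α : ℝ) :
    HasDerivAt (lensMap α) ((α / (2 * Real.pi) : ℝ) : ℂ) 1 := by
  have hpow : HasDerivAt (fun ω : ℂ ↦ ω ^ ((α / Real.pi : ℝ) : ℂ)) ((α / Real.pi : ℝ) : ℂ) 1 := by
    simpa using (hasDerivAt_id (1 : ℂ)).cpow_const (c := ((α / Real.pi : ℝ) : ℂ))
      (Or.inl one_pos)
  refine ((hpow.sub_const 1).div (hpow.add_const 1) ?_).congr_deriv ?_
  · rw [Complex.one_cpow]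
    norm_num
  · rw [Complex.one_cpow]
    push_cast
    ring

theorem differentiableOn_lensMap {α : ℝ} (hα₀ : 0 < α) (hα : α < 2 * Real.pi) :
    DifferentiableOn ℂ (lensMap α) {ω | 0 < ω.re} := by
  have hpow : DifferentiableOn ℂ (fun ω : ℂ ↦ ω ^ ((α / Real.pi : ℝ) : ℂ)) {ω | 0 < ω.re} :=
    differentiableOn_id.cpow_const fun ω hω ↦ Or.inl hω
  exact (hpow.sub_const 1).div (hpow.add_const 1) fun ω hω ↦
    cpow_ofReal_add_one_ne_zero (div_pos hα₀ Real.pi_pos).ne' (abs_div_pi_lt_two hα₀ hα)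
      (le_of_lt hω)

theorem continuousOn_lensMap {α : ℝ} (hα₀ : 0 < α) (hα : α < 2 * Real.pi) :
    ContinuousOn (lensMap α) {ω | 0 ≤ ω.re} := by
  have hκ := div_pos hα₀ Real.pi_pos
  have hpow : ContinuousOn (fun ω : ℂ ↦ ω ^ ((α / Real.pi : ℝ) : ℂ)) {ω | 0 ≤ ω.re} := fun ω hω ↦
    (Complex.continuousAt_cpow_const_of_re_pos (Or.inl hω)
      (by rwa [Complex.ofReal_re])).continuousWithinAt
  exact (hpow.sub continuousOn_const).div (hpow.add continuousOn_const) fun ω hω ↦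
    cpow_ofReal_add_one_ne_zero hκ.ne' (abs_div_pi_lt_two hα₀ hα) hω

theorem tendsto_lensMap_cobounded {α : ℝ} (hα₀ : 0 < α) :
    Tendsto (lensMap α) (cobounded ℂ) (𝓝 1) := by
  refine tendsto_cayley_cobounded.comp (tendsto_norm_atTop_iff_cobounded.1 ?_)
  simp only [Complex.norm_cpow_real]
  exact (tendsto_rpow_atTop (div_pos hα₀ Real.pi_pos)).comp tendsto_norm_cobounded_atTop

theorem cos_mul_norm_one_sub_lensMap_sq {α : ℝ} (hα₀ : 0 < α) (hα : α < 2 * Real.pi) {ω : ℂ}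
    (hω : ω.re = 0) :
    Real.cos (α / 2) * ‖1 - lensMap α ω ^ 2‖ = 1 - ‖lensMap α ω‖ ^ 2 := by
  have hκ₀ := (div_pos hα₀ Real.pi_pos).ne'
  have hangle : α / 2 = Real.pi / 2 * (α / Real.pi) := by field_simp
  rw [hangle]
  exact mul_norm_one_sub_cayley_sq
    (cpow_ofReal_add_one_ne_zero hκ₀ (abs_div_pi_lt_two hα₀ hα) hω.ge)
    (cpow_ofReal_re_of_re_eq_zero hκ₀ hω)

theorem lensMap_ofReal_rpow {α a b : ℝ} (hα₀ : 0 < α) (ha : 0 ≤ a) (hb : 0 < b) :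
    lensMap α (((a / b) ^ (Real.pi / α) : ℝ) : ℂ) = ((a - b) / (a + b) : ℝ) := by
  have hab : 0 ≤ a / b := by positivity
  rw [lensMap, ← Complex.ofReal_cpow (by positivity), ← Real.rpow_mul hab,
    div_mul_div_cancel₀ hα₀.ne', div_self Real.pi_ne_zero, Real.rpow_one, cayley_ofReal_div hb.ne']

/-- The quotient `lensMap α / cayley`, with its singularity at `1` removed. -/
def lensQuotient (α : ℝ) (ω : ℂ) : ℂ := (ω + 1) * dslope (lensMap α) 1 ω

theorem cayley_mul_lensQuotient (α : ℝ) {ω : ℂ} (hω : 0 ≤ ω.re) :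
    cayley ω * lensQuotient α ω = lensMap α ω := by
  have h := sub_smul_dslope (lensMap α) 1 ω
  rw [lensMap_one, sub_zero, smul_eq_mul] at h
  rw [cayley, lensQuotient, ← mul_assoc, div_mul_cancel₀ _ (add_one_ne_zero_of_re_nonneg hω), h]

theorem lensQuotient_ne_zero {α : ℝ} (hα₀ : 0 < α) (hα : α < 2 * Real.pi) {ω : ℂ}
    (hω : 0 ≤ ω.re) : lensQuotient α ω ≠ 0 := by
  rcases eq_or_ne ω 1 with rfl | hω₁
  · rw [lensQuotient, dslope_same, (hasDerivAt_lensMap_one α).deriv]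
    exact mul_ne_zero (add_one_ne_zero_of_re_nonneg hω) (Complex.ofReal_ne_zero.2 (by positivity))
  · refine right_ne_zero_of_mul (a := cayley ω) ?_
    rwa [cayley_mul_lensQuotient α hω, Ne, lensMap_eq_zero_iff hα₀ hα hω]

theorem setOf_re_pos_mem_nhds_one : {ω : ℂ | 0 < ω.re} ∈ 𝓝 1 :=
  (isOpen_lt continuous_const Complex.continuous_re).mem_nhds (by simp)

theorem differentiableOn_lensQuotient {α : ℝ} (hα₀ : 0 < α) (hα : α < 2 * Real.pi) :
    DifferentiableOn ℂ (lensQuotient α) {ω | 0 < ω.re} :=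
  (differentiableOn_id.add_const 1).mul
    ((Complex.differentiableOn_dslope setOf_re_pos_mem_nhds_one).2
      (differentiableOn_lensMap hα₀ hα))

theorem continuousOn_lensQuotient {α : ℝ} (hα₀ : 0 < α) (hα : α < 2 * Real.pi) :
    ContinuousOn (lensQuotient α) {ω | 0 ≤ ω.re} := by
  have hnhds : {ω : ℂ | 0 ≤ ω.re} ∈ 𝓝 1 :=
    mem_of_superset setOf_re_pos_mem_nhds_one fun ω (hω : 0 < ω.re) ↦ hω.le
  exact (continuousOn_id.add continuousOn_const).mul ((continuousOn_dslope hnhds).2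
    ⟨continuousOn_lensMap hα₀ hα, (hasDerivAt_lensMap_one α).differentiableAt⟩)

theorem tendsto_lensQuotient_cobounded {α : ℝ} (hα₀ : 0 < α) :
    Tendsto (lensQuotient α) (cobounded ℂ ⊓ 𝓟 {ω | 0 < ω.re}) (𝓝 1) := by
  have h : Tendsto (fun ω ↦ lensMap α ω / cayley ω) (cobounded ℂ) (𝓝 (1 / 1)) :=
    (tendsto_lensMap_cobounded hα₀).div tendsto_cayley_cobounded one_ne_zero
  rw [div_one] at h
  refine (h.mono_left inf_le_left).congr' ?_
  filter_upwards [mem_inf_of_left (eventually_ne_cobounded (1 : ℂ)),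
    mem_inf_of_right (mem_principal_self _)] with ω hω₁ (hω : 0 < ω.re)
  have hcayley : cayley ω ≠ 0 :=
    (cayley_eq_zero_iff (add_one_ne_zero_of_re_nonneg hω.le)).not.2 hω₁
  rw [← cayley_mul_lensQuotient α hω.le, mul_div_cancel_left₀ _ hcayley]

end ConformalMap

section PhragmenLindelof

open Bornology Filter Topology

variable {E : Type*} [NormedAddCommGroup E] [NormedSpace ℂ E]

theorem diffContOnCl_re_pos {f : ℂ → E} (hd : DifferentiableOn ℂ f {z | 0 < z.re})
    (hc : ContinuousOn f {z | 0 ≤ z.re}) : DiffContOnCl ℂ f {z | 0 < z.re} :=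
  ⟨hd, by rwa [Complex.closure_setOfPred_lt_re]⟩

theorem norm_le_of_norm_le_on_imaginary_axis {f : ℂ → E} {y : E} {C : ℝ} {z : ℂ}
    (hf : DiffContOnCl ℂ f {z | 0 < z.re})
    (hlim : Tendsto f (cobounded ℂ ⊓ 𝓟 {z | 0 < z.re}) (𝓝 y))
    (hC : ∀ w : ℂ, w.re = 0 → ‖f w‖ ≤ C) (hz : 0 ≤ z.re) : ‖f z‖ ≤ C := by
  have hreal : Tendsto (fun x : ℝ ↦ (x : ℂ)) atTop (cobounded ℂ ⊓ 𝓟 {z | 0 < z.re}) :=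
    tendsto_inf.2 ⟨RCLike.tendsto_ofReal_atTop_cobounded ℂ,
      tendsto_principal.2 ((eventually_gt_atTop 0).mono fun _ ↦ id)⟩
  refine PhragmenLindelof.right_half_plane_of_bounded_on_real hf ⟨0, two_pos, 0, ?_⟩
    (hlim.comp hreal).norm.isBoundedUnder_le (fun x ↦ hC _ (Complex.re_ofReal_mul x Complex.I ▸
      by rw [Complex.I_re, mul_zero])) hz
  simpa only [zero_mul, Real.exp_zero] using hlim.isBigO_one ℝ

-- Negative powers are allowed because `lensQuotient α` has no zero in the closed half-plane.
theorem norm_lensMap_zpow_mul_norm_le {α C : ℝ} (hα₀ : 0 < α) (hα : α < 2 * Real.pi)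
    {P : ℂ → E} (hP : Differentiable ℂ P) (k : ℤ)
    (hC : ∀ w : ℂ, w.re = 0 → ‖lensMap α w‖ ^ k * ‖P (lensMap α w)‖ ≤ C) {ω : ℂ}
    (hω : 0 ≤ ω.re) : ‖lensMap α ω‖ ^ k * ‖P (lensMap α ω)‖ ≤ ‖cayley ω‖ ^ k * C := by
  have hnorm : ∀ w : ℂ, 0 ≤ w.re → ‖lensMap α w‖ ^ k * ‖P (lensMap α w)‖ =
      ‖cayley w‖ ^ k * ‖lensQuotient α w ^ k • P (lensMap α w)‖ := fun w hw ↦ by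
    rw [norm_smul, norm_zpow, ← mul_assoc, ← mul_zpow, ← norm_mul, cayley_mul_lensQuotient α hw]
  have hdiff : DiffContOnCl ℂ (fun w ↦ lensQuotient α w ^ k • P (lensMap α w)) {w | 0 < w.re} :=
    (diffContOnCl_re_pos
      ((differentiableOn_lensQuotient hα₀ hα).zpow
        (Or.inl fun w hw ↦ lensQuotient_ne_zero hα₀ hα (le_of_lt hw)))
      ((continuousOn_lensQuotient hα₀ hα).zpow₀ k
        fun w hw ↦ Or.inl (lensQuotient_ne_zero hα₀ hα hw))).smul
      (hP.comp_diffContOnCl (diffContOnCl_re_pos (differentiableOn_lensMap hα₀ hα)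
        (continuousOn_lensMap hα₀ hα)))
  have hlim : Tendsto (fun w ↦ lensQuotient α w ^ k • P (lensMap α w))
      (cobounded ℂ ⊓ 𝓟 {w | 0 < w.re}) (𝓝 ((1 : ℂ) ^ k • P 1)) :=
    ((tendsto_lensQuotient_cobounded hα₀).zpow₀ k (Or.inl one_ne_zero)).smul
      ((hP.continuous.tendsto 1).comp ((tendsto_lensMap_cobounded hα₀).mono_left inf_le_left))
  rw [hnorm ω hω]
  gcongr
  refine norm_le_of_norm_le_on_imaginary_axis hdiff hlim (fun w hw ↦ ?_) hω
  simpa only [hnorm w hw.ge, norm_cayley_of_re_eq_zero hw, one_zpow, one_mul] using hC w hw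

end PhragmenLindelof

section Decay

variable {n : ℕ}

theorem lpNorm_lensMap_zpow_smul_multiplier_le {p α C : ℝ} (hp : 1 ≤ p) (hα₀ : 0 < α)
    (hα : α < 2 * Real.pi) (f : (Fin n → Bool) → X) (m : Finset (Fin n) → ℕ) (k : ℤ)
    (hC : ∀ w : ℂ, w.re = 0 →
      lpNorm p (lensMap α w ^ k • multiplier (fun A ↦ lensMap α w ^ m A) f) ≤ C)
    {ω : ℂ} (hω : 0 ≤ ω.re) :
    lpNorm p (lensMap α ω ^ k • multiplier (fun A ↦ lensMap α ω ^ m A) f) ≤ ‖cayley ω‖ ^ k * C := by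
  have hp_fact : Fact (1 ≤ ENNReal.ofReal p) := ⟨ENNReal.one_le_ofReal.2 hp⟩
  set P : ℂ → PiLp (ENNReal.ofReal p) fun _ : Fin n → Bool ↦ X :=
    fun z ↦ WithLp.toLp _ (multiplier (fun A ↦ z ^ m A) f)
  have hnorm : ∀ z : ℂ, lpNorm p (z ^ k • multiplier (fun A ↦ z ^ m A) f) =
      ((2 ^ n : ℝ)⁻¹) ^ (1 / p) * (‖z‖ ^ k * ‖P z‖) := fun z ↦ by
    rw [lpNorm_eq_mul_norm_toLp (by linarith), WithLp.toLp_smul, norm_smul, norm_zpow]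
  have hpos : 0 < ((2 ^ n : ℝ)⁻¹) ^ (1 / p) := by positivity
  have h := norm_lensMap_zpow_mul_norm_le hα₀ hα (differentiable_toLp_multiplier_pow _ m f) k
    (fun w hw ↦ (le_div_iff₀' hpos).2 (hnorm _ ▸ hC w hw)) hω
  rwa [← mul_div_assoc, le_div_iff₀' hpos, ← hnorm] at h

theorem lpNorm_heat_le_of_tailSpace {p α : ℝ} (hp : 1 ≤ p) (hα₀ : 0 < α) (hα : α < 2 * Real.pi)
    {f : (Fin n → Bool) → X} {d : ℕ} (hf : tailSpace f d)
    (hcontr : ∀ ω : ℂ, ω.re = 0 → lpNorm p (noise (lensMap α ω) f) ≤ lpNorm p f)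
    {t : ℝ} (ht : 0 ≤ t) :
    lpNorm p (heat t f) ≤
      (((1 + Real.exp (-t)) ^ (Real.pi / α) - (1 - Real.exp (-t)) ^ (Real.pi / α)) /
        ((1 + Real.exp (-t)) ^ (Real.pi / α) + (1 - Real.exp (-t)) ^ (Real.pi / α))) ^ d *
        lpNorm p f := by
  have hκ : 0 < Real.pi / α := by positivity
  rcases ht.eq_or_lt with rfl | ht
  · have hpow : ((1 : ℝ) + 1) ^ (Real.pi / α) ≠ 0 := by positivity
    rw [heat_zero, neg_zero, Real.exp_zero, sub_self, Real.zero_rpow hκ.ne', sub_zero, add_zero,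
      div_self hpow, one_pow, one_mul]
  have hb : 0 < 1 - Real.exp (-t) := sub_pos.2 (Real.exp_lt_one_iff.2 (neg_neg_of_pos ht))
  have hpoint := lensMap_ofReal_rpow (a := 1 + Real.exp (-t)) hα₀ (by positivity) hb
  have hvalue : (1 + Real.exp (-t) - (1 - Real.exp (-t))) / (1 + Real.exp (-t) +
      (1 - Real.exp (-t))) = Real.exp (-t) := by ring
  have h := lpNorm_lensMap_zpow_smul_multiplier_le hp hα₀ hα f (fun A ↦ A.card - d) d
    (C := lpNorm p f)
    (fun ω hω ↦ by
      rw [zpow_natCast, ← noise_eq_pow_smul_of_tailSpace hf]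
      exact hcontr ω hω)
    (ω := (((1 + Real.exp (-t)) / (1 - Real.exp (-t))) ^ (Real.pi / α) : ℝ))
    (by rw [Complex.ofReal_re]; positivity)
  rwa [hpoint, hvalue, zpow_natCast, zpow_natCast, ← noise_eq_pow_smul_of_tailSpace hf,
    ← heat_eq_noise, norm_cayley_ofReal_rpow hκ.le hb (by linarith [Real.exp_pos (-t)])] at h

theorem le_lpNorm_heat_of_degLE {p α : ℝ} (hp : 1 ≤ p) (hα₀ : 0 < α) (hα : α < 2 * Real.pi)
    {f : (Fin n → Bool) → X} {d : ℕ} (hf : degLE f d) {t : ℝ} (ht : 0 ≤ t)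
    (hcontr : ∀ ω : ℂ, ω.re = 0 →
      lpNorm p (noise (lensMap α ω)⁻¹ (heat t f)) ≤ lpNorm p (heat t f)) :
    (((Real.exp t + 1) ^ (Real.pi / α) - (Real.exp t - 1) ^ (Real.pi / α)) /
      ((Real.exp t + 1) ^ (Real.pi / α) + (Real.exp t - 1) ^ (Real.pi / α))) ^ d * lpNorm p f ≤
      lpNorm p (heat t f) := by
  have hκ : 0 < Real.pi / α := by positivity
  rcases ht.eq_or_lt with rfl | ht
  · have hpow : ((1 : ℝ) + 1) ^ (Real.pi / α) ≠ 0 := by positivity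
    rw [heat_zero, Real.exp_zero, sub_self, Real.zero_rpow hκ.ne', sub_zero, add_zero,
      div_self hpow, one_pow, one_mul]
  have hb : 0 < Real.exp t - 1 := sub_pos.2 (Real.one_lt_exp_iff.2 ht)
  have hpoint := lensMap_ofReal_rpow (a := Real.exp t + 1) hα₀ (by positivity) hb
  have hvalue : (Real.exp t + 1 - (Real.exp t - 1)) / (Real.exp t + 1 + (Real.exp t - 1)) =
      Real.exp (-t) := by
    rw [Real.exp_neg]
    field_simp
    ring
  have hexp : ((Real.exp (-t) : ℝ) : ℂ) ≠ 0 := Complex.ofReal_ne_zero.2 (Real.exp_ne_zero _)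
  have hdeg := degLE_heat hf t
  have h := lpNorm_lensMap_zpow_smul_multiplier_le hp hα₀ hα (heat t f) (fun A ↦ d - A.card) (-d)
    (C := lpNorm p (heat t f))
    (fun ω hω ↦ by
      rw [← noise_inv_eq_zpow_smul_of_degLE hdeg (lensMap_ne_zero_of_re_eq_zero hα₀ hα hω)]
      exact hcontr ω hω)
    (ω := (((Real.exp t + 1) / (Real.exp t - 1)) ^ (Real.pi / α) : ℝ))
    (by rw [Complex.ofReal_re]; positivity)
  have hratio : 0 < ((Real.exp t + 1) ^ (Real.pi / α) - (Real.exp t - 1) ^ (Real.pi / α)) /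
      ((Real.exp t + 1) ^ (Real.pi / α) + (Real.exp t - 1) ^ (Real.pi / α)) :=
    div_pos (sub_pos.2 (Real.rpow_lt_rpow hb.le (by linarith) hκ)) (by positivity)
  rwa [hpoint, hvalue, ← noise_inv_eq_zpow_smul_of_degLE hdeg hexp, heat_eq_noise t f,
    noise_inv_noise hexp, norm_cayley_ofReal_rpow hκ.le hb (by linarith), zpow_neg, zpow_natCast,
    le_inv_mul_iff₀ (pow_pos hratio d), ← heat_eq_noise] at h

end Decay

section ScalarContraction

variable {n : ℕ}

theorem lpNorm_noise_le_of_norm_le {p : ℝ} (hp : 1 < p) {z : ℂ}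
    (hz : |p - 2| / p * ‖1 - z ^ 2‖ ≤ 1 - ‖z‖ ^ 2) (f : (Fin n → Bool) → ℂ) :
    lpNorm p (noise z f) ≤ lpNorm p f :=
  lpNorm_noise_le (by linarith) (norm_add_rpow_add_norm_sub_rpow_le hp hz) f

theorem lpNorm_noise_lensMap_le {p α : ℝ} (hp : 1 < p) (hα₀ : 0 < α) (hα : α < 2 * Real.pi)
    (hcos : Real.cos (α / 2) = |p - 2| / p) {ω : ℂ} (hω : ω.re = 0) (f : (Fin n → Bool) → ℂ) :
    lpNorm p (noise (lensMap α ω) f) ≤ lpNorm p f :=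
  lpNorm_noise_le_of_norm_le hp (hcos ▸ cos_mul_norm_one_sub_lensMap_sq hα₀ hα hω).le f

theorem neg_mul_norm_one_sub_inv_sq {z : ℂ} (hz : z ≠ 0) {c : ℝ}
    (h : c * ‖1 - z ^ 2‖ = 1 - ‖z‖ ^ 2) : -c * ‖1 - z⁻¹ ^ 2‖ = 1 - ‖z⁻¹‖ ^ 2 := by
  have hz' : ‖z‖ ≠ 0 := norm_ne_zero_iff.2 hz
  have hinv : 1 - z⁻¹ ^ 2 = -((1 - z ^ 2) * z⁻¹ ^ 2) := by
    field_simp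
    ring
  rw [hinv, norm_neg, norm_mul, norm_pow, norm_inv, ← mul_assoc, neg_mul, h]
  field_simp
  ring

theorem lpNorm_noise_inv_lensMap_le {p α : ℝ} (hp : 1 < p) (hα₀ : 0 < α) (hα : α < 2 * Real.pi)
    (hcos : Real.cos (α / 2) = -(|p - 2| / p)) {ω : ℂ} (hω : ω.re = 0)
    (f : (Fin n → Bool) → ℂ) : lpNorm p (noise (lensMap α ω)⁻¹ f) ≤ lpNorm p f := by
  refine lpNorm_noise_le_of_norm_le hp (le_of_eq ?_) f
  rw [← neg_neg (|p - 2| / p), ← hcos]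
  exact neg_mul_norm_one_sub_inv_sq (lensMap_ne_zero_of_re_eq_zero hα₀ hα hω)
    (cos_mul_norm_one_sub_lensMap_sq hα₀ hα hω)

theorem cos_arcsin_two_mul_sqrt_div {p : ℝ} (hp : 1 ≤ p) :
    Real.cos (Real.arcsin (2 * Real.sqrt (p - 1) / p)) = |p - 2| / p := by
  have hp₀ : 0 < p := by linarith
  have hsq : 1 - (2 * Real.sqrt (p - 1) / p) ^ 2 = ((p - 2) / p) ^ 2 := by
    rw [div_pow, mul_pow, Real.sq_sqrt (sub_nonneg.2 hp)]
    field_simp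
    ring
  rw [Real.cos_arcsin, hsq, Real.sqrt_sq_eq_abs, abs_div, abs_of_pos hp₀]

end ScalarContraction

/-- **Sharp scalar bounds on the decay of the heat semigroup.** -/
theorem stmt10 (p : ℝ) (hp : 1 < p) (θ : ℝ)
    (hθ : θ = 2 * Real.arcsin (2 * Real.sqrt (p - 1) / p))
    (n d : ℕ) (hdn : d ≤ n) :
    (∀ f : (Fin n → Bool) → ℂ, degLE f d → ∀ t : ℝ, 0 ≤ t →
      (((Real.exp t + 1) ^ (Real.pi / (2 * Real.pi - θ)) -
          (Real.exp t - 1) ^ (Real.pi / (2 * Real.pi - θ))) /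
        ((Real.exp t + 1) ^ (Real.pi / (2 * Real.pi - θ)) +
          (Real.exp t - 1) ^ (Real.pi / (2 * Real.pi - θ)))) ^ d * lpNorm p f ≤
        lpNorm p (heat t f)) ∧
    (∀ f : (Fin n → Bool) → ℂ, tailSpace f d → ∀ t : ℝ, 0 ≤ t →
      lpNorm p (heat t f) ≤
        (((1 + Real.exp (-t)) ^ (Real.pi / θ) - (1 - Real.exp (-t)) ^ (Real.pi / θ)) /
          ((1 + Real.exp (-t)) ^ (Real.pi / θ) + (1 - Real.exp (-t)) ^ (Real.pi / θ))) ^ d *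
          lpNorm p f) := by
  have hsin : 0 < 2 * Real.sqrt (p - 1) / p :=
    div_pos (mul_pos two_pos (Real.sqrt_pos.2 (sub_pos.2 hp))) (by linarith)
  have hθ_pos : 0 < θ := hθ ▸ mul_pos two_pos (Real.arcsin_pos.2 hsin)
  have hθ_le : θ ≤ Real.pi := by linarith [Real.arcsin_le_pi_div_two (2 * Real.sqrt (p - 1) / p)]
  have hcos : Real.cos (θ / 2) = |p - 2| / p := by
    rw [hθ, mul_div_cancel_left₀ _ two_ne_zero, cos_arcsin_two_mul_sqrt_div hp.le]
  have hcos_compl : Real.cos ((2 * Real.pi - θ) / 2) = -(|p - 2| / p) := by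
    rw [sub_div, mul_div_cancel_left₀ _ two_ne_zero, Real.cos_pi_sub, hcos]
  have hcompl_pos : 0 < 2 * Real.pi - θ := by linarith
  have hcompl_lt : 2 * Real.pi - θ < 2 * Real.pi := by linarith
  exact ⟨fun f hf t ht ↦ le_lpNorm_heat_of_degLE hp.le hcompl_pos hcompl_lt hf ht
      fun ω hω ↦ lpNorm_noise_inv_lensMap_le hp hcompl_pos hcompl_lt hcos_compl hω _,
    fun f hf t ht ↦ lpNorm_heat_le_of_tailSpace hp.le hθ_pos (by linarith) hf
      (fun ω hω ↦ lpNorm_noise_lensMap_le hp hθ_pos (by linarith) hcos hω f) ht⟩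

end HammingCube
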